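/- The extended internal energy function η : ℝ × ℝ → [0,∞] defined by η(ρ,S) = c_v · ρ^γ · exp(S/(c_v ρ)) if ρ > 0, η(ρ,S) = 0 if ρ = 0 and S ≤ 0, and η(ρ,S) = +∞ otherwise, is lower semicontinuous on ℝ². -/

import Mathlib

/-!
The energy is continuous except at the points `(0, S)` with `S ≤ 0`, where it takes its minimal
value `0`. The delicate case is continuity at `(0, S)` with `S > 0`, where the energy is `∞`: as
`ρ → 0⁺` with `S` bounded away from `0`, the factor `exp (S / (c_v ρ))` beats the decay of `ρ ^ γ`.
-/

open scoped ENNReal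

/-- The extended internal energy `η(ρ, S)` for a polytropic gas with adiabatic exponent `γ`,
where `c_v = 1/(γ-1)`; values in `[0, ∞]`. -/
noncomputable def internalEnergy (γ : ℝ) (p : ℝ × ℝ) : ℝ≥0∞ :=
  if 0 < p.1 then
    ENNReal.ofReal ((1 / (γ - 1)) * p.1 ^ γ * Real.exp (p.2 / ((1 / (γ - 1)) * p.1)))
  else if p.1 = 0 ∧ p.2 ≤ 0 then 0
  else ⊤

open Filter Topology

section RpowMulExpDiv

variable (s : ℝ) {a : ℝ}

theorem tendsto_rpow_mul_exp_div_nhdsGT_zero (ha : 0 < a) :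
    Tendsto (fun x : ℝ ↦ x ^ s * Real.exp (a / x)) (𝓝[>] 0) atTop := by
  refine ((tendsto_exp_mul_div_rpow_atTop s a ha).comp tendsto_inv_nhdsGT_zero).congr' ?_
  filter_upwards [self_mem_nhdsWithin] with x (hx : 0 < x)
  simp only [Function.comp_apply, Real.inv_rpow hx.le, div_inv_eq_mul, ← div_eq_mul_inv]
  exact mul_comm _ _

theorem tendsto_rpow_mul_exp_div_nhdsGT_zero_prod_nhds (ha : 0 < a) :
    Tendsto (fun p : ℝ × ℝ ↦ p.1 ^ s * Real.exp (p.2 / p.1)) (𝓝[>] 0 ×ˢ 𝓝 a) atTop := by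
  have lower_bound_tendsto :
      Tendsto (fun p : ℝ × ℝ ↦ p.1 ^ s * Real.exp (a / 2 / p.1)) (𝓝[>] 0 ×ˢ 𝓝 a) atTop :=
    (tendsto_rpow_mul_exp_div_nhdsGT_zero s (half_pos ha)).comp tendsto_fst
  refine tendsto_atTop_mono' _ ?_ lower_bound_tendsto
  have fst_pos : ∀ᶠ x : ℝ in 𝓝[>] 0, 0 < x := self_mem_nhdsWithin
  have half_lt_snd : ∀ᶠ t in 𝓝 a, a / 2 < t := lt_mem_nhds (half_lt_self ha)
  filter_upwards [fst_pos.prod_mk half_lt_snd] with p ⟨hp₁, hp₂⟩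
  gcongr

end RpowMulExpDiv

section InternalEnergy

variable (γ : ℝ) {p : ℝ × ℝ}

theorem internalEnergy_of_fst_pos (hp : 0 < p.1) :
    internalEnergy γ p =
      ENNReal.ofReal ((γ - 1)⁻¹ * (p.1 ^ γ * Real.exp ((γ - 1) * p.2 / p.1))) := by
  have exponent_eq : p.2 / (1 / (γ - 1) * p.1) = (γ - 1) * p.2 / p.1 := by
    rw [← div_div, div_div_eq_mul_div, div_one, mul_comm]
  rw [internalEnergy, if_pos hp, exponent_eq, one_div, mul_assoc]

theorem internalEnergy_of_fst_neg (hp : p.1 < 0) : internalEnergy γ p = ⊤ := by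
  simp [internalEnergy, hp.not_gt, hp.ne]

theorem internalEnergy_of_fst_nonpos_of_snd_pos (hp₁ : p.1 ≤ 0) (hp₂ : 0 < p.2) :
    internalEnergy γ p = ⊤ := by
  simp [internalEnergy, hp₁.not_gt, hp₂.not_ge]

theorem internalEnergy_of_fst_eq_zero_of_snd_nonpos (hp₁ : p.1 = 0) (hp₂ : p.2 ≤ 0) :
    internalEnergy γ p = 0 := by
  simp [internalEnergy, hp₁, hp₂]

theorem continuousAt_internalEnergy_of_fst_pos (hp : 0 < p.1) :
    ContinuousAt (internalEnergy γ) p := by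
  have formula_continuousAt : ContinuousAt
      (fun q : ℝ × ℝ ↦ (γ - 1)⁻¹ * (q.1 ^ γ * Real.exp ((γ - 1) * q.2 / q.1))) p := by
    fun_prop (disch := simp [hp.ne'])
  refine (ENNReal.continuous_ofReal.continuousAt.comp formula_continuousAt).congr ?_
  filter_upwards [continuousAt_fst.eventually_const_lt hp] with q hq
  exact (internalEnergy_of_fst_pos γ hq).symm

theorem continuousAt_internalEnergy_of_fst_neg (hp : p.1 < 0) :
    ContinuousAt (internalEnergy γ) p := by
  refine (continuousAt_const (y := ⊤)).congr ?_
  filter_upwards [continuousAt_fst.eventually_lt_const hp] with q hq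
  exact (internalEnergy_of_fst_neg γ hq).symm

variable {γ} {S : ℝ}

theorem tendsto_internalEnergy_nhdsGT_zero_prod_nhds (hγ : 1 < γ) (hS : 0 < S) :
    Tendsto (internalEnergy γ) (𝓝[>] 0 ×ˢ 𝓝 S) (𝓝 ⊤) := by
  have hγ' : 0 < γ - 1 := sub_pos.2 hγ
  have rescale_tendsto : Tendsto (fun p : ℝ × ℝ ↦ (p.1, (γ - 1) * p.2))
      (𝓝[>] 0 ×ˢ 𝓝 S) (𝓝[>] 0 ×ˢ 𝓝 ((γ - 1) * S)) :=
    tendsto_id.prodMap (tendsto_id.const_mul (γ - 1))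
  have formula_tendsto : Tendsto
      (fun p : ℝ × ℝ ↦ (γ - 1)⁻¹ * (p.1 ^ γ * Real.exp ((γ - 1) * p.2 / p.1)))
      (𝓝[>] 0 ×ˢ 𝓝 S) atTop :=
    ((tendsto_rpow_mul_exp_div_nhdsGT_zero_prod_nhds γ (mul_pos hγ' hS)).comp
      rescale_tendsto).const_mul_atTop (inv_pos.2 hγ')
  refine (ENNReal.tendsto_ofReal_atTop.comp formula_tendsto).congr' ?_
  have fst_pos : ∀ᶠ ρ : ℝ in 𝓝[>] 0, 0 < ρ := self_mem_nhdsWithin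
  filter_upwards [fst_pos.prod_inl _] with p hp
  exact (internalEnergy_of_fst_pos γ hp).symm

theorem tendsto_internalEnergy_nhdsLE_zero_prod_nhds (hS : 0 < S) :
    Tendsto (internalEnergy γ) (𝓝[≤] 0 ×ˢ 𝓝 S) (𝓝 ⊤) := by
  refine tendsto_const_nhds.congr' ?_
  have fst_nonpos : ∀ᶠ ρ : ℝ in 𝓝[≤] 0, ρ ≤ 0 := self_mem_nhdsWithin
  filter_upwards [fst_nonpos.prod_mk (lt_mem_nhds hS)] with p ⟨hp₁, hp₂⟩
  exact (internalEnergy_of_fst_nonpos_of_snd_pos γ hp₁ hp₂).symm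

theorem continuousAt_internalEnergy_zero_of_pos (hγ : 1 < γ) (hS : 0 < S) :
    ContinuousAt (internalEnergy γ) (0, S) := by
  rw [ContinuousAt, internalEnergy_of_fst_nonpos_of_snd_pos γ le_rfl hS, nhds_prod_eq,
    ← nhdsLE_sup_nhdsGT, sup_prod]
  exact (tendsto_internalEnergy_nhdsLE_zero_prod_nhds hS).sup
    (tendsto_internalEnergy_nhdsGT_zero_prod_nhds hγ hS)

end InternalEnergy

/-- the extended internal energy is lower semicontinuous on `ℝ²`. -/
theorem internalEnergy_lowerSemicontinuous (γ : ℝ) (hγ : 1 < γ) :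
    LowerSemicontinuous (internalEnergy γ) := by
  rintro ⟨ρ, S⟩
  rcases lt_trichotomy ρ 0 with hρ | rfl | hρ
  · exact (continuousAt_internalEnergy_of_fst_neg γ hρ).lowerSemicontinuousAt
  · rcases le_or_gt S 0 with hS | hS
    · intro y hy
      rw [internalEnergy_of_fst_eq_zero_of_snd_nonpos γ rfl hS] at hy
      exact absurd hy not_lt_zero
    · exact (continuousAt_internalEnergy_zero_of_pos hγ hS).lowerSemicontinuousAt
  · exact (continuousAt_internalEnergy_of_fst_pos γ hρ).lowerSemicontinuousAt
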